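/- arXiv:1809.02914 — 7 statements merged into one kernel-verified Lean document; each statement's English description precedes it below -/
import Mathlib

section
/- Let ν be a purely imaginary complex number and m a real number. Suppose f, g : 2ℤ → ℂ are sequences indexed by the even integers satisfying the three-term relation g_k = −((k+1−ν)/2)·f_{k+2} + m·f_k + ((k−1+ν)/2)·f_{k−2} for every even integer k. If f has finite support (f_k = 0 for all but finitely many k) and g_k = 0 for every even k not in {0, 2}, then f_k = 0 for all even k and g_k = 0 for all even k. -/
/-!
Since `ν` is purely imaginary and `k` is even, neither `k + 1 - ν` nor `k - 1 + ν` vanishes, their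
real parts being odd integers. If `f ≠ 0`, let `N` and `M` be the largest and smallest indices of
its support. At `k = N + 2` only the `f N` term of the recurrence survives, so `g (N + 2) ≠ 0` and
`N ≤ 0`; at `k = M - 2` only the `f M` term survives, so `g (M - 2) ≠ 0` and `M ≥ 2`. This
contradicts `M ≤ N`.
-/

/-- Let `ν` be purely imaginary and `m` real. If sequences `f, g` indexed by
the even integers satisfy the three-term relation
`g k = -((k+1-ν)/2) * f (k+2) + m * f k + ((k-1+ν)/2) * f (k-2)` for every even `k`,
`f` has finite support, and `g k = 0` for every even `k ∉ {0, 2}`, then `f` and `g` vanish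
at every even integer. -/
theorem theta_finite_observation
    (ν : ℂ) (hν : ν.re = 0) (m : ℝ) (f g : ℤ → ℂ)
    (hrel : ∀ k : ℤ, Even k →
      g k = -(((k : ℂ) + 1 - ν) / 2) * f (k + 2) + (m : ℂ) * f k
        + (((k : ℂ) - 1 + ν) / 2) * f (k - 2))
    (hfin : {k : ℤ | Even k ∧ f k ≠ 0}.Finite)
    (hg : ∀ k : ℤ, Even k → k ≠ 0 → k ≠ 2 → g k = 0) :
    (∀ k : ℤ, Even k → f k = 0) ∧ (∀ k : ℤ, Even k → g k = 0) := by
  have hf : ∀ k : ℤ, Even k → f k = 0 := by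
    by_contra! hne
    obtain ⟨j, hj⟩ := hne
    have hS : {k : ℤ | Even k ∧ f k ≠ 0}.Nonempty := ⟨j, hj⟩
    obtain ⟨N, ⟨hNe, hN⟩, hmax⟩ := Set.exists_max_image _ id hfin hS
    obtain ⟨M, ⟨hMe, hM⟩, hmin⟩ := Set.exists_min_image _ id hfin hS
    have hMN : M ≤ N := hmin N ⟨hNe, hN⟩
    have hzero_above : ∀ k : ℤ, Even k → N < k → f k = 0 := by
      intro k hk hlt
      by_contra h
      exact absurd (hmax k ⟨hk, h⟩) (not_le.mpr hlt)
    have hzero_below : ∀ k : ℤ, Even k → k < M → f k = 0 := by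
      intro k hk hlt
      by_contra h
      exact absurd (hmin k ⟨hk, h⟩) (not_le.mpr hlt)
    have hN0 : N ≤ 0 := by
      by_contra! hpos
      have he : Even (N + 2) := hNe.add even_two
      have h := hrel (N + 2) he
      rw [hg _ he (by omega) (by omega), hzero_above (N + 2 + 2) (he.add even_two) (by omega),
        hzero_above (N + 2) he (by omega), add_sub_cancel_right] at h
      have hc : ((N + 2 : ℤ) : ℂ) - 1 + ν = 0 := by simpa [hN] using h.symm
      have hre := congrArg Complex.re hc
      simp [hν] at hre
      have hz : ((N + 2 - 1 : ℤ) : ℝ) = 0 := by push_cast; linarith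
      have : N + 2 - 1 = 0 := Int.cast_eq_zero.mp hz
      omega
    have hM2 : 2 ≤ M := by
      by_contra! hlt
      have he : Even (M - 2) := hMe.sub even_two
      have h := hrel (M - 2) he
      rw [hg _ he (by omega) (by omega), hzero_below (M - 2 - 2) (he.sub even_two) (by omega),
        hzero_below (M - 2) he (by omega), sub_add_cancel] at h
      have hc : ((M - 2 : ℤ) : ℂ) + 1 - ν = 0 := by
        have h2 : (((M - 2 : ℤ) : ℂ) + 1 - ν) * f M = 0 := by linear_combination 2 * h
        exact (mul_eq_zero.mp h2).resolve_right hM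
      have hre := congrArg Complex.re hc
      simp [hν] at hre
      have hz : ((M - 2 + 1 : ℤ) : ℝ) = 0 := by push_cast; linarith
      have : M - 2 + 1 = 0 := Int.cast_eq_zero.mp hz
      obtain ⟨r, hr⟩ := hMe
      omega
    omega
  refine ⟨hf, fun k hk => ?_⟩
  rw [hrel k hk, hf _ (hk.add even_two), hf k hk, hf _ (hk.sub even_two)]
  simp
end

section
/- For all real numbers m and b, and every real x with x ≥ max{5, m² − 1}, the inequality √(x²+b²)/√((x+2)²+b²) ≤ (1 + |m|/√(x²+b²))·(1 + |m|/√((x−2)²+b²) − 2|m|/√(x²+b²)) holds. -/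
/-!
Write `R = √(x²+b²)`, `P = √((x+2)²+b²)`, `Q = √((x-2)²+b²)` and `M = |m|`. Since `0 < Q ≤ R`,
replacing `M/Q` by `M/R` only decreases the right-hand side, which becomes
`(1 + M/R)(1 - M/R) = 1 - M²/R²`. As `M² ≤ x + 1 =: u` and `P² = R² + 4u`, it remains to see that
`R/P ≤ 1 - u/R²`. After squaring, with `s = R²`, this is `s³ ≤ (s-u)²(s+4u)`, that is
`0 ≤ u(2s² - 7us + 4u²)`, which holds because `x ≥ 5` forces `s ≥ 4u`.
-/

/-- For all real `m`, `b` and every real `x ≥ max {5, m² - 1}`,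
`√(x²+b²)/√((x+2)²+b²) ≤ (1 + |m|/√(x²+b²)) * (1 + |m|/√((x-2)²+b²) - 2|m|/√(x²+b²))`. -/
theorem key_inequality_principal (m b x : ℝ) (hx : max 5 (m ^ 2 - 1) ≤ x) :
    Real.sqrt (x ^ 2 + b ^ 2) / Real.sqrt ((x + 2) ^ 2 + b ^ 2) ≤
      (1 + |m| / Real.sqrt (x ^ 2 + b ^ 2)) *
        (1 + |m| / Real.sqrt ((x - 2) ^ 2 + b ^ 2) - 2 * |m| / Real.sqrt (x ^ 2 + b ^ 2)) := by
  obtain ⟨h5, hm⟩ := max_le_iff.mp hx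
  have hQ : 0 < Real.sqrt ((x - 2) ^ 2 + b ^ 2) := Real.sqrt_pos.mpr (by nlinarith [sq_nonneg b])
  have hR : 0 < Real.sqrt (x ^ 2 + b ^ 2) := Real.sqrt_pos.mpr (by nlinarith [sq_nonneg b])
  have hP : 0 < Real.sqrt ((x + 2) ^ 2 + b ^ 2) := Real.sqrt_pos.mpr (by nlinarith [sq_nonneg b])
  have hQR : Real.sqrt ((x - 2) ^ 2 + b ^ 2) ≤ Real.sqrt (x ^ 2 + b ^ 2) :=
    Real.sqrt_le_sqrt (by nlinarith)
  have hR2 : Real.sqrt (x ^ 2 + b ^ 2) ^ 2 = x ^ 2 + b ^ 2 := Real.sq_sqrt (by positivity)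
  have hP2 : Real.sqrt ((x + 2) ^ 2 + b ^ 2) ^ 2 = (x + 2) ^ 2 + b ^ 2 :=
    Real.sq_sqrt (by positivity)
  have hM0 : 0 ≤ |m| := abs_nonneg m
  have hM2 : |m| ^ 2 ≤ x + 1 := by rw [sq_abs]; linarith
  generalize Real.sqrt ((x - 2) ^ 2 + b ^ 2) = Q at *
  generalize Real.sqrt (x ^ 2 + b ^ 2) = R at *
  generalize Real.sqrt ((x + 2) ^ 2 + b ^ 2) = P at *
  generalize |m| = M at *
  have hP2' : P ^ 2 = R ^ 2 + 4 * (x + 1) := by rw [hP2, hR2]; ring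
  have hs : 4 * (x + 1) ≤ R ^ 2 := by rw [hR2]; nlinarith [sq_nonneg b]
  have hcube : R ^ 3 ≤ (R ^ 2 - (x + 1)) * P := by
    refine (sq_le_sq₀ (by positivity) (mul_nonneg (by linarith) hP.le)).mp ?_
    rw [mul_pow, hP2']
    have hu : 0 ≤ x + 1 := by linarith
    have hq : 0 ≤ 2 * (R ^ 2) ^ 2 - 7 * (x + 1) * R ^ 2 + 4 * (x + 1) ^ 2 := by
      nlinarith [mul_nonneg (sub_nonneg.mpr hs) hu]
    nlinarith [mul_nonneg hu hq]
  have hmain : R / P ≤ 1 - (x + 1) / R ^ 2 := by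
    rw [div_le_iff₀ hP]
    have e : (1 - (x + 1) / R ^ 2) * P = (R ^ 2 - (x + 1)) * P / R ^ 2 := by field_simp
    rw [e, le_div_iff₀ (by positivity)]
    linarith [hcube, show R * R ^ 2 = R ^ 3 by ring]
  calc R / P ≤ 1 - (x + 1) / R ^ 2 := hmain
    _ ≤ 1 - M ^ 2 / R ^ 2 := by gcongr
    _ = (1 + M / R) * (1 + M / R - 2 * M / R) := by field_simp; ring
    _ ≤ (1 + M / R) * (1 + M / Q - 2 * M / R) := by gcongr
end

section
/- Let m ∈ ℝ and let ν ∈ (−1,1), ν ≠ 0. There exists a constant C > 0, depending only on m, such that for every positive integer n and every integer k ≥ 1 with n − 2k − 1 + ν > 0, one has (4/(n−2k+1+ν))·∏_{ℓ=1}^{k} (1 + (|m|+2−ν)/(n−2ℓ−1+ν)) ≤ C·((n−1+ν)/(n−2k−1+ν))^{(|m|+2−ν)/2}. -/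
/-!
Write `a = |m| + 2 - ν`, `N = n - 1 + ν` and `x = N - 2k > 0`, the smallest of the denominators
`N - 2ℓ`. The midpoint form `2 / y ≤ log ((y + 1) / (y - 1))` of the integral comparison gives
`1 + a / y ≤ ((y + 1) / (y - 1)) ^ (a / 2)` for `y > 1`, and this telescopes over `ℓ < k`
(`prod_le_rpow`). The factor `ℓ = k` is kept aside, because `x` may be arbitrarily small; it
remains to bound `(4 / (x + 2)) (1 + a / x) (x / (x + 1)) ^ (a / 2)` in terms of `m` only.
This amounts to `(x / (x + 1)) ^ (a / 2) ≤ 3 x / 2` (`rpow_le_of_small`). When `ν > 0` the exponent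
may be below `1`, but only by `ν / 2`, while integrality of `n` forces `x ≥ ν`, so that the loss
`(1 + 1 / x) ^ (ν / 2)` is at most `3 / 2` by Bernoulli's inequality.
-/

lemma factor_le_rpow {a y : ℝ} (ha : 0 ≤ a) (hy : 1 < y) :
    1 + a / y ≤ ((y + 1) / (y - 1)) ^ (a / 2) := by
  have hy1 : 0 < y - 1 := by linarith
  have hlog : 2 / y ≤ Real.log ((y + 1) / (y - 1)) := by
    have h := Real.le_log_one_add_of_nonneg (x := 2 / (y - 1)) (by positivity)
    have e1 : 2 * (2 / (y - 1)) / (2 / (y - 1) + 2) = 2 / y := by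
      have : 2 / (y - 1) + 2 = 2 * y / (y - 1) := by field_simp; ring
      rw [this]; field_simp
    have e2 : 1 + 2 / (y - 1) = (y + 1) / (y - 1) := by field_simp; ring
    rwa [e1, e2] at h
  rw [Real.rpow_def_of_pos (by positivity)]
  have h2 : a / y ≤ Real.log ((y + 1) / (y - 1)) * (a / 2) := by
    calc a / y = 2 / y * (a / 2) := by ring
      _ ≤ _ := by gcongr
  linarith [Real.add_one_le_exp (Real.log ((y + 1) / (y - 1)) * (a / 2))]

lemma prod_le_rpow {a N : ℝ} (ha : 0 ≤ a) (k : ℕ) (hN : 1 < N - 2 * k) :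
    ∏ ℓ ∈ Finset.Icc 1 k, (1 + a / (N - 2 * ℓ)) ≤
      ((N - 1) / (N - 2 * k - 1)) ^ (a / 2) := by
  induction k with
  | zero =>
    have : N - 1 ≠ 0 := by norm_num at hN; linarith
    simp [this]
  | succ k ih =>
    push_cast at hN ⊢
    have hk : (0 : ℝ) ≤ k := k.cast_nonneg
    have hf := factor_le_rpow ha hN
    rw [Finset.prod_Icc_succ_top (by omega)]
    push_cast
    have h1 : 0 < N - 1 := by linarith
    have h2 : 0 < N - 2 * k - 1 := by linarith
    have h3 : 0 < N - 2 * (k + 1) - 1 := by linarith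
    have h4 : 0 ≤ 1 + a / (N - 2 * (k + 1)) := by
      have : 0 < N - 2 * (k + 1) := by linarith
      positivity
    refine (mul_le_mul (ih (by linarith)) hf h4 (by positivity)).trans_eq ?_
    have e : N - 2 * (k + 1) + 1 = N - 2 * k - 1 := by ring
    rw [e, ← Real.mul_rpow (by positivity) (by positivity)]
    congr 1
    field_simp

/-- For `ν > 0` the exponent `p` may drop below `1`, by at most `ν / 2`; the condition `ν ≤ x` keeps
the resulting loss `(1 + 1 / x) ^ (ν / 2)` bounded. -/
lemma rpow_le_of_small {x ν p : ℝ} (hx : 0 < x) (hν : ν < 1) (hνx : ν ≤ x)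
    (hp : 1 - ν / 2 ≤ p) : (x / (x + 1)) ^ p ≤ 3 / 2 * x := by
  have hu : 0 < x / (x + 1) := by positivity
  have hu1 : x / (x + 1) ≤ 1 := by rw [div_le_one (by linarith)]; linarith
  have hux : x / (x + 1) ≤ x := div_le_self hx.le (by linarith)
  rcases le_or_gt ν 0 with h | h
  · calc (x / (x + 1)) ^ p ≤ (x / (x + 1)) ^ (1 : ℝ) :=
          Real.rpow_le_rpow_of_exponent_ge hu hu1 (by linarith)
      _ ≤ 3 / 2 * x := by rw [Real.rpow_one]; linarith
  · have hB : (1 + 1 / x) ^ (ν / 2) ≤ 3 / 2 := by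
      have hb := rpow_one_add_le_one_add_mul_self (s := 1 / x) (p := ν / 2)
        (by have : 0 < 1 / x := by positivity
            linarith) (by linarith) (by linarith)
      have : ν / 2 * (1 / x) ≤ 1 / 2 := by
        rw [mul_one_div, div_le_iff₀ hx]; linarith
      linarith
    have hinv : (x / (x + 1)) ^ (-(ν / 2)) = (1 + 1 / x) ^ (ν / 2) := by
      rw [Real.rpow_neg hu.le, ← Real.inv_rpow hu.le]
      congr 1
      field_simp
    calc (x / (x + 1)) ^ p ≤ (x / (x + 1)) ^ (1 + -(ν / 2)) :=
          Real.rpow_le_rpow_of_exponent_ge hu hu1 (by linarith)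
      _ = x / (x + 1) * (1 + 1 / x) ^ (ν / 2) := by
          rw [Real.rpow_add hu, Real.rpow_one, hinv]
      _ ≤ x * (3 / 2) := by gcongr
      _ = 3 / 2 * x := by ring

/-- For `m` real there is a constant `C > 0`, depending only on `m`, such
that for every `ν ∈ (-1,1) \ {0}`, every positive integer `n` and every `k ≥ 1` with
`n - 2k - 1 + ν > 0`, one has
`(4/(n-2k+1+ν)) ∏_{ℓ=1}^k (1 + (|m|+2-ν)/(n-2ℓ-1+ν)) ≤ C ((n-1+ν)/(n-2k-1+ν))^((|m|+2-ν)/2)`. -/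
theorem product_estimate_complementary (m : ℝ) :
    ∃ C > (0 : ℝ), ∀ ν : ℝ, ν ∈ Set.Ioo (-1 : ℝ) 1 → ν ≠ 0 →
      ∀ n : ℤ, 0 < n → ∀ k : ℕ, 1 ≤ k → (0 : ℝ) < (n : ℝ) - 2 * k - 1 + ν →
        4 / ((n : ℝ) - 2 * k + 1 + ν) *
            ∏ ℓ ∈ Finset.Icc 1 k, (1 + (|m| + 2 - ν) / ((n : ℝ) - 2 * ℓ - 1 + ν)) ≤
          C * (((n : ℝ) - 1 + ν) / ((n : ℝ) - 2 * k - 1 + ν)) ^ ((|m| + 2 - ν) / 2) := by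
  refine ⟨6 * (|m| + 4), by positivity, ?_⟩
  rintro ν ⟨hν1, hν2⟩ - n - k hk hx
  obtain ⟨k, rfl⟩ : ∃ j, k = j + 1 := ⟨k - 1, by omega⟩
  have hm := abs_nonneg m
  have hk0 : (0 : ℝ) ≤ k := k.cast_nonneg
  -- `x - ν` is an integer exceeding `-1`, hence nonnegative.
  have hνx : ν ≤ (n : ℝ) - 2 * (k + 1 : ℕ) - 1 + ν := by
    have h : (-1 : ℤ) < n - 2 * (k + 1 : ℕ) - 1 := by
      have : ((-1 : ℤ) : ℝ) < ((n - 2 * (k + 1 : ℕ) - 1 : ℤ) : ℝ) := by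
        push_cast at hx ⊢; linarith
      exact_mod_cast this
    have h' : (0 : ℤ) ≤ n - 2 * (k + 1 : ℕ) - 1 := by omega
    have h'' : ((0 : ℤ) : ℝ) ≤ ((n - 2 * (k + 1 : ℕ) - 1 : ℤ) : ℝ) := by exact_mod_cast h'
    push_cast at h'' ⊢; linarith
  obtain ⟨a, ha⟩ : ∃ a, a = |m| + 2 - ν := ⟨_, rfl⟩
  obtain ⟨x, hxdef⟩ : ∃ x, x = (n : ℝ) - 2 * (k + 1 : ℕ) - 1 + ν := ⟨_, rfl⟩
  rw [← hxdef] at hx hνx ⊢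
  rw [← ha]
  push_cast at hxdef
  have ha0 : 0 < a := by linarith
  have hN : (n : ℝ) - 1 + ν = x + 2 * k + 2 := by linarith
  have hden : (n : ℝ) - 2 * (k + 1 : ℕ) + 1 + ν = x + 2 := by push_cast; linarith
  have hprod : ∏ ℓ ∈ Finset.Icc 1 (k + 1), (1 + a / ((n : ℝ) - 2 * ℓ - 1 + ν)) ≤
      ((x + 2 * k + 2) / (x + 1)) ^ (a / 2) * (1 + a / x) := by
    rw [Finset.prod_Icc_succ_top (by omega)]
    have e0 : (n : ℝ) - 2 * (k + 1 : ℕ) - 1 + ν = x := by push_cast; linarith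
    have e1 : ∀ ℓ : ℕ, (n : ℝ) - 2 * ℓ - 1 + ν = (x + 2 * k + 2) - 2 * ℓ := by
      intro ℓ; linarith
    rw [e0]
    simp only [e1]
    have h := prod_le_rpow (a := a) (N := x + 2 * k + 2) ha0.le k (by linarith)
    have e2 : x + 2 * k + 2 - 2 * k - 1 = x + 1 := by ring
    rw [e2] at h
    refine mul_le_mul_of_nonneg_right (h.trans ?_) (by positivity)
    gcongr
    · have : 0 ≤ x + 2 * k + 2 - 1 := by linarith
      positivity
    · linarith
  have hsmall := rpow_le_of_small (p := a / 2) hx hν2 hνx (by linarith)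
  have hsplit : ((x + 2 * k + 2) / (x + 1)) ^ (a / 2) =
      (x / (x + 1)) ^ (a / 2) * ((x + 2 * k + 2) / x) ^ (a / 2) := by
    rw [← Real.mul_rpow (by positivity) (by positivity)]
    congr 1
    field_simp
  have hconst : 4 / (x + 2) * (3 / 2 * x * (1 + a / x)) ≤ 6 * (|m| + 4) := by
    have e : 4 / (x + 2) * (3 / 2 * x * (1 + a / x)) = 6 * (x + a) / (x + 2) := by
      field_simp; ring
    rw [e, div_le_iff₀ (by linarith)]
    nlinarith [mul_nonneg hm hx.le]
  rw [hden, hN]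
  calc _ ≤ 4 / (x + 2) * (((x + 2 * k + 2) / (x + 1)) ^ (a / 2) * (1 + a / x)) := by gcongr
    _ = 4 / (x + 2) * ((x / (x + 1)) ^ (a / 2) * (1 + a / x)) *
        ((x + 2 * k + 2) / x) ^ (a / 2) := by rw [hsplit]; ring
    _ ≤ 4 / (x + 2) * (3 / 2 * x * (1 + a / x)) * ((x + 2 * k + 2) / x) ^ (a / 2) := by gcongr
    _ ≤ _ := by gcongr
end

section
/- Let m ∈ ℝ and let ν ∈ (−1,1), ν ≠ 0. For every positive integer n and every integer k ≥ 2 with n − 2k − ν > max{7, 2|m|(|m|+2)}, the inequality (2|m|/(n−2k+3+ν))·(1 + (|m|+2−ν)/(n−2k+1+ν)) + (n−2k+3−ν)/(n−2k+5+ν) ≤ (1 + (|m|+2−ν)/(n−2k+1+ν))·(1 + (|m|+2−ν)/(n−2k−1+ν)) holds. -/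
/-!
Write `a = |m|`, `N = n - 2k`, `c = a + 2 - ν > 0` and `y = N + 3 + ν > 0`. Since
`(N + 3 - ν) / (N + 5 + ν) ≤ 1`, it suffices that
`1 ≤ (1 + c / (N + 1 + ν)) (1 + c / (N - 1 + ν) - 2a / y)`.
Enlarging the denominators under `c` to `y` only decreases the right-hand side, as both factors
stay nonnegative, and then the product equals `1 + ((4 - 2ν) y + (2 - ν)² - a²) / y²`. This is at
least `1` because `4 - 2ν > 2` and `y > 2a(a + 2) + 1 > a²`.
-/

/-- For `ν ∈ (-1,1) \ {0}`, `n` a positive integer and `k ≥ 2` an integer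
with `n - 2k - ν > max {7, 2|m|(|m|+2)}`, the inequality
`(2|m|/(n-2k+3+ν))(1 + (|m|+2-ν)/(n-2k+1+ν)) + (n-2k+3-ν)/(n-2k+5+ν)
  ≤ (1 + (|m|+2-ν)/(n-2k+1+ν))(1 + (|m|+2-ν)/(n-2k-1+ν))` holds. -/
theorem key_inequality_complementary
    (m : ℝ) (ν : ℝ) (hν : ν ∈ Set.Ioo (-1 : ℝ) 1) (hν0 : ν ≠ 0)
    (n : ℤ) (hn : 0 < n) (k : ℤ) (hk : 2 ≤ k)
    (h : max 7 (2 * |m| * (|m| + 2)) < (n : ℝ) - 2 * k - ν) :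
    2 * |m| / ((n : ℝ) - 2 * k + 3 + ν) * (1 + (|m| + 2 - ν) / ((n : ℝ) - 2 * k + 1 + ν))
        + ((n : ℝ) - 2 * k + 3 - ν) / ((n : ℝ) - 2 * k + 5 + ν) ≤
      (1 + (|m| + 2 - ν) / ((n : ℝ) - 2 * k + 1 + ν)) *
        (1 + (|m| + 2 - ν) / ((n : ℝ) - 2 * k - 1 + ν)) := by
  obtain ⟨hν1, hν2⟩ := hν
  obtain ⟨h7, hm⟩ := max_lt_iff.mp h
  have ha : 0 ≤ |m| := abs_nonneg m
  generalize |m| = a at *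
  generalize (n : ℝ) - 2 * k = N at *
  have ha2 : 0 ≤ a ^ 2 := sq_nonneg a
  have hy : 0 < N + 3 + ν := by linarith
  have hc : 0 < a + 2 - ν := by linarith
  have h1 : (a + 2 - ν) / (N + 3 + ν) ≤ (a + 2 - ν) / (N + 1 + ν) :=
    div_le_div_of_nonneg_left hc.le (by linarith) (by linarith)
  have h2 : (a + 2 - ν) / (N + 3 + ν) ≤ (a + 2 - ν) / (N - 1 + ν) :=
    div_le_div_of_nonneg_left hc.le (by linarith) (by linarith)
  have h3 : (N + 3 - ν) / (N + 5 + ν) ≤ 1 := by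
    rw [div_le_one (by linarith)]
    linarith
  have hf : 0 ≤ 1 + (a + 2 - ν) / (N + 3 + ν) - 2 * a / (N + 3 + ν) := by
    have : 1 + (a + 2 - ν) / (N + 3 + ν) - 2 * a / (N + 3 + ν)
        = (N + 5 - a) / (N + 3 + ν) := by
      field_simp
      ring
    rw [this]
    exact div_nonneg (by nlinarith) hy.le
  -- With both denominators equal to `y = N + 3 + ν`, the product is
  -- `1 + ((4 - 2ν) y + (2 - ν)² - a²) / y²`, and `y` dominates `a²`.
  have h4 : 1 ≤ (1 + (a + 2 - ν) / (N + 3 + ν)) *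
      (1 + (a + 2 - ν) / (N + 3 + ν) - 2 * a / (N + 3 + ν)) := by
    have e : (1 + (a + 2 - ν) / (N + 3 + ν)) *
        (1 + (a + 2 - ν) / (N + 3 + ν) - 2 * a / (N + 3 + ν))
        = 1 + ((4 - 2 * ν) * (N + 3 + ν) + (2 - ν) ^ 2 - a ^ 2) / (N + 3 + ν) ^ 2 := by
      field_simp
      ring
    rw [e]
    have : 0 ≤ (4 - 2 * ν) * (N + 3 + ν) + (2 - ν) ^ 2 - a ^ 2 := by
      have : 0 ≤ (2 - 2 * ν) * (N + 3 + ν) := mul_nonneg (by linarith) hy.le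
      nlinarith [sq_nonneg (2 - ν)]
    have := div_nonneg this (sq_nonneg (N + 3 + ν))
    linarith
  have h5 : (1 + (a + 2 - ν) / (N + 3 + ν)) *
      (1 + (a + 2 - ν) / (N + 3 + ν) - 2 * a / (N + 3 + ν)) ≤
      (1 + (a + 2 - ν) / (N + 1 + ν)) *
      (1 + (a + 2 - ν) / (N - 1 + ν) - 2 * a / (N + 3 + ν)) := by
    have : 0 ≤ (a + 2 - ν) / (N + 3 + ν) := div_nonneg hc.le hy.le
    exact mul_le_mul (by linarith) (by linarith) hf (by linarith)
  linarith
end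

section
/- Let m ∈ ℝ and let ν be a positive integer. There exists a constant C > 0, depending only on m, such that for every integer n ≥ ν + 1 and every integer k ≥ 1 with n − 2k − 1 − ν ≥ 1, one has ∏_{ℓ=1}^{k} (1 + |m|/(n−2ℓ−1−ν)) ≤ C·((n−ν)/(n−2k−ν))^{|m|/2}. -/
/-!
With `x = n - ν`, the bound `1 + t ≤ exp t` reduces the estimate to a bound on
`∑ 1 / (x - 2ℓ - 1)`. Instead of comparing this sum with an integral, each term is dominated by a
telescoping difference (`one_div_le_telescope`) whose logarithmic part sums to
`(log x - log (x - 2k)) / 2` and whose remaining part is at most `3/2`.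
This gives the constant `C = exp (3|m|/2)`.
-/

/-- The discrete form of the integral comparison: `log ((y + 2) / y) / 2 ≥ 1 / (y + 2)`, and the
defect `1 / (y - 1) - 1 / (y + 2)` is absorbed by a telescoping multiple of `1 / (y - 1)`. -/
lemma one_div_le_telescope (y : ℝ) (hy : 1 < y) :
    1 / (y - 1) ≤ (3 / 2 / (y - 1) - 3 / 2 / (y + 1)) + (Real.log (y + 2) - Real.log y) / 2 := by
  have h1 : 0 < y - 1 := by linarith
  have hlog : 2 / (y + 2) ≤ Real.log (y + 2) - Real.log y := by
    have h := Real.one_sub_inv_le_log_of_pos (x := (y + 2) / y) (by positivity)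
    rw [Real.log_div (by positivity) (by positivity)] at h
    have e : 1 - ((y + 2) / y)⁻¹ = 2 / (y + 2) := by field_simp; ring
    linarith
  have hrat : 1 / (y - 1) ≤ (3 / 2 / (y - 1) - 3 / 2 / (y + 1)) + 2 / (y + 2) / 2 := by
    have e : (3 / 2 / (y - 1) - 3 / 2 / (y + 1)) + 2 / (y + 2) / 2 - 1 / (y - 1)
        = 3 / ((y - 1) * (y + 1) * (y + 2)) := by
      field_simp; ring
    have : 0 ≤ 3 / ((y - 1) * (y + 1) * (y + 2)) := by positivity
    linarith
  linarith

lemma sum_one_div_le (x : ℝ) (k : ℕ) (h : 1 < x - 2 * k) :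
    ∑ ℓ ∈ Finset.Icc 1 k, 1 / (x - 2 * ℓ - 1) ≤
      3 / 2 / (x - 2 * k - 1) + (Real.log x - Real.log (x - 2 * k)) / 2 := by
  induction k with
  | zero =>
    have : 0 < x - 1 := by simpa using h
    simp
    positivity
  | succ k ih =>
    rw [Finset.sum_Icc_succ_top (by omega)]
    have ih := ih (by push_cast at h; linarith)
    have hs := one_div_le_telescope _ h
    have e1 : x - 2 * ((k + 1 : ℕ) : ℝ) + 1 = x - 2 * k - 1 := by push_cast; ring
    have e2 : x - 2 * ((k + 1 : ℕ) : ℝ) + 2 = x - 2 * k := by push_cast; ring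
    rw [e1, e2] at hs
    linarith

/-- For `m` real there is `C > 0`, depending only on `m`, such that for
every positive integer `ν`, every integer `n ≥ ν + 1` and every `k ≥ 1` with
`n - 2k - 1 - ν ≥ 1`, one has
`∏_{ℓ=1}^k (1 + |m|/(n-2ℓ-1-ν)) ≤ C ((n-ν)/(n-2k-ν))^(|m|/2)`. -/
theorem product_estimate_discrete (m : ℝ) :
    ∃ C > (0 : ℝ), ∀ ν : ℤ, 0 < ν → ∀ n : ℤ, ν + 1 ≤ n → ∀ k : ℕ, 1 ≤ k →
      1 ≤ n - 2 * (k : ℤ) - 1 - ν →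
      ∏ ℓ ∈ Finset.Icc 1 k, (1 + |m| / ((n : ℝ) - 2 * ℓ - 1 - ν)) ≤
        C * (((n : ℝ) - ν) / ((n : ℝ) - 2 * k - ν)) ^ (|m| / 2) := by
  refine ⟨Real.exp (3 / 2 * |m|), Real.exp_pos _, ?_⟩
  intro ν _ n _ k _ hk
  obtain ⟨x, hx⟩ : ∃ x : ℝ, x = n - ν := ⟨_, rfl⟩
  have hxk : 1 ≤ x - 2 * k - 1 := by
    have : (1 : ℝ) ≤ n - 2 * k - 1 - ν := by exact_mod_cast hk
    linarith
  have hk0 : (0 : ℝ) ≤ k := k.cast_nonneg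
  have hxpos : 0 < x := by linarith
  have hypos : 0 < x - 2 * k := by linarith
  have ek : (n : ℝ) - 2 * k - ν = x - 2 * k := by rw [hx]; ring
  have hm := abs_nonneg m
  rw [ek, ← hx, Real.rpow_def_of_pos (by positivity), ← Real.exp_add,
    Real.log_div hxpos.ne' hypos.ne']
  calc ∏ ℓ ∈ Finset.Icc 1 k, (1 + |m| / ((n : ℝ) - 2 * ℓ - 1 - ν))
      ≤ ∏ ℓ ∈ Finset.Icc 1 k, Real.exp (|m| * (1 / (x - 2 * ℓ - 1))) := by
        apply Finset.prod_le_prod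
        · intro ℓ hℓ
          have : (ℓ : ℝ) ≤ k := by exact_mod_cast (Finset.mem_Icc.1 hℓ).2
          have : 0 < (n : ℝ) - 2 * ℓ - 1 - ν := by linarith
          positivity
        · intro ℓ _
          have e : (n : ℝ) - 2 * ℓ - 1 - ν = x - 2 * ℓ - 1 := by rw [hx]; ring
          rw [e, mul_one_div, add_comm]
          exact Real.add_one_le_exp _
    _ = Real.exp (|m| * ∑ ℓ ∈ Finset.Icc 1 k, 1 / (x - 2 * ℓ - 1)) := by
        rw [← Real.exp_sum, Finset.mul_sum]
    _ ≤ _ := by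
        apply Real.exp_le_exp.2
        have hs := sum_one_div_le x k (by linarith)
        have hb : 3 / 2 / (x - 2 * k - 1) ≤ 3 / 2 := div_le_self (by norm_num) hxk
        have := mul_le_mul_of_nonneg_left (hs.trans (add_le_add_left hb _)) hm
        linarith
end

section
/- For every m ∈ ℝ, every real b > 0, and every real x ≥ max{2m² + 2, b + 6}, the inequality √(x²−b²)/√((x+2)²−b²) ≤ (1 + |m|/(x−2−b))·(1 + |m|/(x−4−b) − 2|m|/√(x²−b²)) holds. -/
/-!
Put `u = x - b ≥ 6`, `s = √(x² - b²)`, `t = √((x+2)² - b²)`, `p = u - 2`. The right-hand side expands to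
`1 + |m| (1/p + 1/(u-4) - 2/s) + m²/p (1/(u-4) - 2/s)`. The linear coefficient is nonnegative because
`s ≥ u`. Since `1/(u-4) ≥ 1/p`, the quadratic coefficient is at least
`1/p² - 2/(p s) ≥ -1/s²`, so the right-hand side is at least `1 - m²/s² ≥ 1 - (x-2)/(2s²)`.
On the other side, `s t ≤ (s² + t²)/2` gives `s/t ≤ 1 - (2x+2)/t²`, and
`(x-2)/(2s²) ≤ (2x+2)/t²` follows from `s² = (x-b)(x+b) ≥ 6x`.
-/

/-- For every real `m`, every real `b > 0` and every real
`x ≥ max {2m² + 2, b + 6}`,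
`√(x²-b²)/√((x+2)²-b²) ≤ (1 + |m|/(x-2-b)) * (1 + |m|/(x-4-b) - 2|m|/√(x²-b²))`. -/
theorem key_inequality_discrete (m b x : ℝ) (hb : 0 < b) (hx : max (2 * m ^ 2 + 2) (b + 6) ≤ x) :
    Real.sqrt (x ^ 2 - b ^ 2) / Real.sqrt ((x + 2) ^ 2 - b ^ 2) ≤
      (1 + |m| / (x - 2 - b)) *
        (1 + |m| / (x - 4 - b) - 2 * |m| / Real.sqrt (x ^ 2 - b ^ 2)) := by
  obtain ⟨h1, h2⟩ := max_le_iff.mp hx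
  have hs2 : 6 * x ≤ x ^ 2 - b ^ 2 := by nlinarith
  have hs0 : 0 < x ^ 2 - b ^ 2 := by linarith
  have ht0 : 0 < (x + 2) ^ 2 - b ^ 2 := by nlinarith
  have hsu : x - b ≤ Real.sqrt (x ^ 2 - b ^ 2) := Real.le_sqrt_of_sq_le (by nlinarith)
  have hss := Real.sq_sqrt hs0.le
  have htt := Real.sq_sqrt ht0.le
  have hs := Real.sqrt_pos.mpr hs0
  have ht := Real.sqrt_pos.mpr ht0
  set s := Real.sqrt (x ^ 2 - b ^ 2)
  set t := Real.sqrt ((x + 2) ^ 2 - b ^ 2)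
  rw [← sq_abs m] at h1
  have hm : 0 ≤ |m| := abs_nonneg m
  generalize |m| = μ at *
  have hleft : s / t ≤ 1 - (2 * x + 2) / t ^ 2 := by
    have h : 1 - (2 * x + 2) / t ^ 2 - s / t = (t - s) ^ 2 / (2 * t ^ 2) := by
      have hx' : 2 * x + 2 = (t ^ 2 - s ^ 2) / 2 := by rw [hss, htt]; ring
      rw [hx']
      field_simp
      ring
    have : 0 ≤ (t - s) ^ 2 / (2 * t ^ 2) := by positivity
    linarith
  have hmid : μ ^ 2 / s ^ 2 ≤ (2 * x + 2) / t ^ 2 := by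
    rw [div_le_div_iff₀ (by positivity) (by positivity)]
    have ht' : t ^ 2 = s ^ 2 + 4 * x + 4 := by rw [hss, htt]; ring
    have hμ : μ ^ 2 * t ^ 2 ≤ (x - 2) / 2 * t ^ 2 := by gcongr; linarith
    rw [ht'] at hμ ⊢
    rw [← hss] at hs2
    nlinarith
  have hp : 0 < x - 2 - b := by linarith
  have hr : 0 < x - 4 - b := by linarith
  -- `P`, `R`, `S` are the reciprocals of `p`, `u - 4`, `s`.
  have hPR : (x - 2 - b)⁻¹ ≤ (x - 4 - b)⁻¹ := by gcongr; linarith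
  have hSP : s⁻¹ ≤ (x - 2 - b)⁻¹ := by gcongr; linarith
  have hP : 0 < (x - 2 - b)⁻¹ := by positivity
  have hright : 1 - μ ^ 2 / s ^ 2 ≤
      (1 + μ / (x - 2 - b)) * (1 + μ / (x - 4 - b) - 2 * μ / s) := by
    simp only [div_eq_mul_inv, ← inv_pow]
    generalize (x - 2 - b)⁻¹ = P at *
    generalize (x - 4 - b)⁻¹ = R at *
    generalize s⁻¹ = S at *
    have e1 : 0 ≤ μ * (P + R - 2 * S) := mul_nonneg hm (by linarith)
    have e2 : 0 ≤ μ ^ 2 * (P * (R - P)) :=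
      mul_nonneg (sq_nonneg _) (mul_nonneg hP.le (by linarith))
    have e3 : 0 ≤ μ ^ 2 * (P - S) ^ 2 := by positivity
    nlinarith
  linarith
end

section
/- Let m ∈ ℝ and let ν be a positive integer. For every integer n ≥ ν + 1 and every integer k ≥ 2 with n − 2k − ν > max{6, 2m² + 2}, the inequality (2|m|/√((n−2k+3)² − ν²))·(1 + |m|/(n−2k+1−ν)) + √((n−2k+3)² − ν²)/√((n−2k+5)² − ν²) ≤ (1 + |m|/(n−2k+1−ν))·(1 + |m|/(n−2k−1−ν)) holds. -/
/-!
Put `x = n - 2k - ν` and `a = |m|`, so that `x > 6` and `2a² + 2 < x`. The two radicands factor as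
`(x+3)(x+3+2ν)` and `(x+5)(x+5+2ν)`. Hence the first root is at least `x + 3`, and the quotient of
the roots is at most `√((x+3)/(x+5)) ≤ (x+4)/(x+5) = 1 - 1/(x+5)`. With these bounds the dependence
on `ν` disappears, and the rational inequality `rational_bound` remains: its terms linear in `a`
have the right sign, and the quadratic ones contribute at most
`a² (x-5) / ((x+1)(x-1)(x+3))`, which the slack `1/(x+5)` absorbs because `a² ≤ x`.
-/

/-- The inequality left after the square roots are replaced by their `ν`-free bounds. -/
lemma rational_bound (a x : ℝ) (ha : 0 ≤ a) (hx : 6 < x) (hax : 2 * a ^ 2 + 2 < x) :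
    2 * a / (x + 3) * (1 + a / (x + 1)) + (x + 4) / (x + 5) ≤
      (1 + a / (x + 1)) * (1 + a / (x - 1)) := by
  have h1 : 0 < x - 1 := by linarith
  have h3 : 0 < x + 3 := by linarith
  have h5 : 0 < x + 5 := by linarith
  have h0 : 0 < x + 1 := by linarith
  have key : (1 + a / (x + 1)) * (1 + a / (x - 1)) -
      (2 * a / (x + 3) * (1 + a / (x + 1)) + (x + 4) / (x + 5)) =
      (a * (6 * x + 2) * (x + 5) +
        ((x + 1) * (x - 1) * (x + 3) - a ^ 2 * (x - 5) * (x + 5))) /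
        ((x + 1) * (x - 1) * (x + 3) * (x + 5)) := by
    field_simp
    ring
  have hlin : 0 ≤ a * (6 * x + 2) * (x + 5) := by
    have : 0 ≤ 6 * x + 2 := by linarith
    positivity
  have hquad : a ^ 2 * (x - 5) * (x + 5) ≤ (x + 1) * (x - 1) * (x + 3) := by
    have hp : 0 ≤ (x - 5) * (x + 5) := mul_nonneg (by linarith) h5.le
    have := mul_le_mul_of_nonneg_right (show a ^ 2 ≤ x by nlinarith) hp
    nlinarith
  have hnum := div_nonneg (add_nonneg hlin (sub_nonneg.2 hquad))
    (by positivity : 0 ≤ (x + 1) * (x - 1) * (x + 3) * (x + 5))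
  linarith

/-- For `ν` a positive integer, `n ≥ ν + 1` and `k ≥ 2` an integer with
`n - 2k - ν > max {6, 2m² + 2}`, the inequality
`(2|m|/√((n-2k+3)² - ν²))(1 + |m|/(n-2k+1-ν)) + √((n-2k+3)² - ν²)/√((n-2k+5)² - ν²)
  ≤ (1 + |m|/(n-2k+1-ν))(1 + |m|/(n-2k-1-ν))` holds. -/
theorem inductive_step_discrete
    (m : ℝ) (ν : ℤ) (hν : 0 < ν) (n : ℤ) (hn : ν + 1 ≤ n) (k : ℤ) (hk : 2 ≤ k)
    (h : max 6 (2 * m ^ 2 + 2) < (n : ℝ) - 2 * k - ν) :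
    2 * |m| / Real.sqrt (((n : ℝ) - 2 * k + 3) ^ 2 - (ν : ℝ) ^ 2) *
          (1 + |m| / ((n : ℝ) - 2 * k + 1 - ν))
        + Real.sqrt (((n : ℝ) - 2 * k + 3) ^ 2 - (ν : ℝ) ^ 2) /
            Real.sqrt (((n : ℝ) - 2 * k + 5) ^ 2 - (ν : ℝ) ^ 2) ≤
      (1 + |m| / ((n : ℝ) - 2 * k + 1 - ν)) * (1 + |m| / ((n : ℝ) - 2 * k - 1 - ν)) := by
  obtain ⟨h6, hm⟩ := max_lt_iff.1 h
  have hν' : (0 : ℝ) < ν := by exact_mod_cast hν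
  obtain ⟨x, hx⟩ : ∃ x : ℝ, x = (n : ℝ) - 2 * k - ν := ⟨_, rfl⟩
  rw [← hx] at h6 hm
  rw [← sq_abs] at hm
  have ha := abs_nonneg m
  have hN : (n : ℝ) - 2 * k = x + ν := by linarith
  rw [hN, show x + (ν : ℝ) + 1 - ν = x + 1 by ring, show x + (ν : ℝ) - 1 - ν = x - 1 by ring]
  have hS : x + 3 ≤ Real.sqrt ((x + ν + 3) ^ 2 - (ν : ℝ) ^ 2) := by
    apply Real.le_sqrt_of_sq_le
    nlinarith
  have hST : Real.sqrt ((x + ν + 3) ^ 2 - (ν : ℝ) ^ 2) /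
      Real.sqrt ((x + ν + 5) ^ 2 - (ν : ℝ) ^ 2) ≤ (x + 4) / (x + 5) := by
    have hT : 0 < (x + ν + 5) ^ 2 - (ν : ℝ) ^ 2 := by nlinarith
    rw [← Real.sqrt_div' _ hT.le]
    apply Real.sqrt_le_iff.2 ⟨by positivity, ?_⟩
    rw [div_pow, div_le_div_iff₀ hT (by positivity)]
    -- After cancelling `x + 5`, the claim is `(x+3)(x+5)(x+3+2ν) ≤ (x+4)²(x+5+2ν)`.
    have hc : (x + 3) * (x + 5) * (x + 3 + 2 * ν) ≤ (x + 4) ^ 2 * (x + 5 + 2 * ν) := by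
      apply mul_le_mul <;> nlinarith
    have := mul_le_mul_of_nonneg_right hc (show 0 ≤ x + 5 by linarith)
    nlinarith
  refine le_trans (add_le_add ?_ hST) (rational_bound |m| x ha h6 hm)
  gcongr
end
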